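/- Let X^n ~ N(0, I_n) be standard Gaussian on ℝ^n and let g : ℝ^n → ℝ be continuously differentiable with ‖∇g(x)‖₂ ≤ 1 for all x. Then for every p ≥ 0 and every r ≥ p/2, P{g(X^n) − ln ‖e^g‖_p ≥ r} ≤ e^{−(r + p/2)²/2}, where ‖e^g‖_p := (E[e^{p g(X^n)}])^{1/p} for p > 0 and ‖e^g‖_0 := e^{E[g(X^n)]}. -/

import Mathlib

open MeasureTheory ProbabilityTheory

/-!
Write `γ` for the standard Gaussian measure and `‖exp g‖_t` for the `L^t(γ)` norm. The heart of the
matter is the bound `log ‖exp g‖_q ≤ log ‖exp g‖_p + (q - p) / 2` for `0 ≤ p ≤ q`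
(`cgf_div_le`, and `cgf_div_le_integral` for `p = 0`). Given this, the Chernoff bound with exponent
`q` gives `exp (q * ((q - p) / 2 - r))`, and `q = r + p / 2`, which is at least `p` exactly when
`r ≥ p / 2`, yields `exp (-q ^ 2 / 2)`.

The norm comparison is a consequence of the Prékopa–Leindler inequality. With `s = p / q` it is
applied to `exp (q g)` and the constant `1`, both weighted by the Gaussian density. Because
`s |x|² + (1 - s) |y|² - |z|² = s (1 - s) |x - y|²` for `z = s x + (1 - s) y`, the Gaussian weights
leave room for a quadratic cost, and the required pointwise inequality reduces to
`g x - g z ≤ |x - z| ≤ t / 2 + |x - z|² / (2 t)` with `t = q - p`. The Gaussian form of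
Prékopa–Leindler (`gaussian_prekopa`) is proved in dimension one from the Brunn–Minkowski inequality
on the line and extended to dimension `n` by induction through Fubini.
-/

/-! ### Brunn–Minkowski and Prékopa–Leindler on the line -/

open scoped ENNReal Pointwise in
/-- The sets `s • K + (1 - s) * min L` and `s * max K + (1 - s) • L` lie in `C` and meet in at most
one point, since every element of the first is at most `s * max K + (1 - s) * min L`, and every
element of the second at least that. -/
theorem brunn_minkowski_real_compact {s : ℝ} (hs0 : 0 < s) (hs1 : s < 1) {K L C : Set ℝ}
    (hK : IsCompact K) (hL : IsCompact L) (hKn : K.Nonempty) (hLn : L.Nonempty)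
    (hC : ∀ a ∈ K, ∀ b ∈ L, s * a + (1 - s) * b ∈ C) :
    ENNReal.ofReal s * volume K + ENNReal.ofReal (1 - s) * volume L ≤ volume C := by
  have hs1' : 0 < 1 - s := by linarith
  set a := sSup K with ha
  set b := sInf L with hb
  have haK : a ∈ K := hK.sSup_mem hKn
  have hbL : b ∈ L := hL.sInf_mem hLn
  have h1 : volume (((1 - s) * b) +ᵥ (s • K)) = ENNReal.ofReal s * volume K := by
    rw [measure_vadd, Measure.addHaar_smul]
    simp [abs_of_pos hs0]
  have h2 : volume ((s * a) +ᵥ ((1 - s) • L)) = ENNReal.ofReal (1 - s) * volume L := by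
    rw [measure_vadd, Measure.addHaar_smul]
    simp [abs_of_pos hs1']
  rw [← h1, ← h2, ← measure_union₀]
  · apply measure_mono
    rintro x (hx | hx)
    · obtain ⟨_, ⟨k, hk, rfl⟩, rfl⟩ := hx
      simpa [add_comm] using hC k hk b hbL
    · obtain ⟨_, ⟨k, hk, rfl⟩, rfl⟩ := hx
      simpa [add_comm] using hC a haK k hk
  · exact (((hL.smul (1 - s)).vadd (s * a)).measurableSet).nullMeasurableSet
  · refine measure_mono_null (t := {s * a + (1 - s) * b}) ?_ (by simp)
    rintro x ⟨hx, hx'⟩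
    obtain ⟨_, ⟨k, hk, rfl⟩, rfl⟩ := hx
    obtain ⟨_, ⟨l, hl, rfl⟩, h⟩ := hx'
    have e1 : k ≤ a := le_csSup hK.bddAbove hk
    have e2 : b ≤ l := csInf_le hL.bddBelow hl
    simp only [smul_eq_mul, vadd_eq_add, Set.mem_singleton_iff] at h ⊢
    nlinarith [mul_le_mul_of_nonneg_left e1 hs0.le, mul_le_mul_of_nonneg_left e2 hs1'.le]

/-- One-dimensional Brunn–Minkowski inequality for measurable sets, by inner regularity. No
measurability of `C` is needed, so it applies without knowing that `s • A + (1 - s) • B` is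
measurable. -/
theorem brunn_minkowski_real {s : ℝ} (hs0 : 0 < s) (hs1 : s < 1) {A B C : Set ℝ}
    (hA : MeasurableSet A) (hB : MeasurableSet B) (hAn : A.Nonempty) (hBn : B.Nonempty)
    (hC : ∀ a ∈ A, ∀ b ∈ B, s * a + (1 - s) * b ∈ C) :
    ENNReal.ofReal s * volume A + ENNReal.ofReal (1 - s) * volume B ≤ volume C := by
  obtain ⟨a, ha⟩ := hAn
  obtain ⟨b, hb⟩ := hBn
  rw [hA.measure_eq_iSup_isCompact, hB.measure_eq_iSup_isCompact]
  simp only [ENNReal.mul_iSup]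
  have key : ∀ K, K ⊆ A → IsCompact K → ∀ L, L ⊆ B → IsCompact L →
      ENNReal.ofReal s * volume K + ENNReal.ofReal (1 - s) * volume L ≤ volume C := by
    intro K hKA hK L hLB hL
    have hKA' : insert a K ⊆ A := Set.insert_subset ha hKA
    have hLB' : insert b L ⊆ B := Set.insert_subset hb hLB
    refine le_trans ?_ (brunn_minkowski_real_compact hs0 hs1 (hK.insert a) (hL.insert b)
      (Set.insert_nonempty _ _) (Set.insert_nonempty _ _)
      (fun x hx y hy => hC x (hKA' hx) y (hLB' hy)))
    gcongr <;> exact Set.subset_insert _ _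
  -- flatten the constrained suprema to suprema over subtypes
  have hne : ∀ D : Set ℝ, Nonempty {K : Set ℝ // K ⊆ D ∧ IsCompact K} :=
    fun D => ⟨⟨∅, Set.empty_subset _, isCompact_empty⟩⟩
  have e : ∀ (D : Set ℝ) (w : ENNReal), (⨆ K, ⨆ (_ : K ⊆ D), ⨆ (_ : IsCompact K), w * volume K) =
      ⨆ K : {K : Set ℝ // K ⊆ D ∧ IsCompact K}, w * volume K.1 := by
    intro D w
    rw [iSup_subtype]
    simp only [iSup_and]
  rw [e, e]
  have hneA := hne A
  have hneB := hne B
  exact ENNReal.iSup_add_iSup_le fun K L => key K.1 K.2.1 K.2.2 L.1 L.2.1 L.2.2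

/-- Layer-cake formula for a bounded `ENNReal`-valued function. -/
theorem lintegral_eq_lintegral_superlevel {F : ℝ → ENNReal} (hF : Measurable F)
    (hF1 : ∀ x, F x ≤ 1) :
    ∫⁻ x, F x = ∫⁻ t in Set.Ioi (0 : ℝ), volume {x | ENNReal.ofReal t < F x} := by
  have hfin : ∀ x, F x ≠ ⊤ := fun x => ne_top_of_le_ne_top ENNReal.one_ne_top (hF1 x)
  have h := lintegral_eq_lintegral_meas_lt (volume : Measure ℝ) (f := fun x => (F x).toReal)
    (Filter.Eventually.of_forall fun x => ENNReal.toReal_nonneg) hF.ennreal_toReal.aemeasurable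
  simp only [ENNReal.ofReal_toReal (hfin _)] at h
  rw [h]
  refine setLIntegral_congr_fun measurableSet_Ioi fun t ht => ?_
  simp only [ENNReal.ofReal_lt_iff_lt_toReal (le_of_lt ht) (hfin _)]

/-- One-dimensional Prékopa–Leindler inequality for functions normalised to supremum `1`, in the
additive form obtained by integrating Brunn–Minkowski over the superlevel sets. The supremum
conditions guarantee that the superlevel sets of `F` and `G` at heights below `1` are nonempty. -/
theorem prekopa_leindler_sup_one {s : ℝ} (hs0 : 0 < s) (hs1 : s < 1) {F G H : ℝ → ENNReal}
    (hF : Measurable F) (hG : Measurable G) (hH : Measurable H)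
    (hF1 : ⨆ x, F x = 1) (hG1 : ⨆ x, G x = 1)
    (hFGH : ∀ (c : ENNReal) (x y : ℝ), c < F x → c < G y → c < H (s * x + (1 - s) * y)) :
    ENNReal.ofReal s * (∫⁻ x, F x) + ENNReal.ofReal (1 - s) * (∫⁻ x, G x) ≤ ∫⁻ x, H x := by
  have hF1' : ∀ x, F x ≤ 1 := fun x => hF1 ▸ le_iSup F x
  have hG1' : ∀ x, G x ≤ 1 := fun x => hG1 ▸ le_iSup G x
  refine le_trans ?_ (lintegral_mono (fun x => min_le_left (H x) 1))
  have mono : ∀ P : ℝ → ENNReal, Measurable fun t : ℝ => volume {x | ENNReal.ofReal t < P x} := by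
    intro P
    refine Antitone.measurable fun t t' h => measure_mono fun x hx => ?_
    exact lt_of_le_of_lt (ENNReal.ofReal_le_ofReal h) hx
  rw [lintegral_eq_lintegral_superlevel hF hF1', lintegral_eq_lintegral_superlevel hG hG1',
    lintegral_eq_lintegral_superlevel (hH.min measurable_const) (fun x => min_le_right _ _),
    ← lintegral_const_mul _ (mono F), ← lintegral_const_mul _ (mono G),
    ← lintegral_add_left ((mono F).const_mul _)]
  refine lintegral_mono fun t => ?_
  rcases lt_or_ge (ENNReal.ofReal t) 1 with ht | ht
  · refine brunn_minkowski_real hs0 hs1 (measurableSet_lt measurable_const hF)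
      (measurableSet_lt measurable_const hG) ?_ ?_ ?_
    · exact lt_iSup_iff.1 (hF1 ▸ ht)
    · exact lt_iSup_iff.1 (hG1 ▸ ht)
    · intro a ha b hb
      exact lt_min (hFGH _ _ _ ha hb) ht
  · have e1 : {x | ENNReal.ofReal t < F x} = ∅ := by
      ext x; simpa using (hF1' x).trans ht
    have e2 : {x | ENNReal.ofReal t < G x} = ∅ := by
      ext x; simpa using (hG1' x).trans ht
    simp [e1, e2]

/-! ### The Gaussian form of Prékopa–Leindler -/

theorem ennreal_weighted_am_gm {s : ℝ} (hs0 : 0 < s) (hs1 : s < 1) (x y : ENNReal) :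
    x ^ s * y ^ (1 - s) ≤ ENNReal.ofReal s * x + ENNReal.ofReal (1 - s) * y := by
  have hs1' : 0 < 1 - s := by linarith
  have hpq : (s⁻¹).HolderConjugate (1 - s)⁻¹ :=
    Real.holderConjugate_iff.2 ⟨(one_lt_inv₀ hs0).2 hs1, by simp⟩
  have h := ENNReal.young_inequality (x ^ s) (y ^ (1 - s)) hpq
  rw [← ENNReal.rpow_mul, ← ENNReal.rpow_mul, mul_inv_cancel₀ hs0.ne', mul_inv_cancel₀ hs1'.ne',
    ENNReal.rpow_one, ENNReal.rpow_one, ENNReal.ofReal_inv_of_pos hs0,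
    ENNReal.ofReal_inv_of_pos hs1', div_eq_mul_inv, div_eq_mul_inv, inv_inv, inv_inv] at h
  rwa [mul_comm (ENNReal.ofReal s), mul_comm (ENNReal.ofReal (1 - s))]

/-- The standard Gaussian density in the form `exp (A - x ^ 2 / 2)`, convenient for taking powers. -/
theorem gaussianPDF_eq_exp : ∃ A : ℝ, ∀ x, gaussianPDF 0 1 x =
    ENNReal.ofReal (Real.exp (A - x ^ 2 / 2)) := by
  refine ⟨Real.log ((√(2 * Real.pi))⁻¹), fun x => ?_⟩
  rw [gaussianPDF, gaussianPDFReal, sub_eq_add_neg (Real.log _), Real.exp_add,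
    Real.exp_log (by positivity)]
  congr 2
  · simp
  · congr 1; simp; ring

/-- The identity `s x² + (1 - s) y² - z² = s (1 - s) (x - y)²` for `z = s x + (1 - s) y`, written
with `x - z = (1 - s) (x - y)` and exponentiated. -/
theorem gaussianPDF_geodesic {s : ℝ} (hs1 : s < 1) (x y : ℝ) :
    ENNReal.ofReal (Real.exp (s / (2 * (1 - s)) * (x - (s * x + (1 - s) * y)) ^ 2)) *
      (gaussianPDF 0 1 x ^ s * gaussianPDF 0 1 y ^ (1 - s)) =
    gaussianPDF 0 1 (s * x + (1 - s) * y) := by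
  obtain ⟨A, hA⟩ := gaussianPDF_eq_exp
  have hs1' : 1 - s ≠ 0 := by linarith
  rw [hA, hA, hA, ENNReal.ofReal_rpow_of_pos (Real.exp_pos _),
    ENNReal.ofReal_rpow_of_pos (Real.exp_pos _), ← ENNReal.ofReal_mul (by positivity),
    ← ENNReal.ofReal_mul (by positivity), ← Real.exp_mul, ← Real.exp_mul, ← Real.exp_add,
    ← Real.exp_add]
  congr 2
  field_simp
  ring

/-- The Gaussian inequality in dimension one, for bounded `u`: Prékopa–Leindler applied to `u φ`,
`φ` and `v φ` with `φ` the Gaussian density, after dividing the first two by their suprema. The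
weighted AM–GM inequality turns the additive conclusion into the multiplicative one. Boundedness
of `u` makes the supremum of `u φ` finite. -/
theorem gaussian_prekopa_one_dim_bounded {s : ℝ} (hs0 : 0 < s) (hs1 : s < 1) {u v : ℝ → ENNReal}
    (hu : Measurable u) (hv : Measurable v) (N : ENNReal) (hN : N ≠ ⊤) (huN : ∀ x, u x ≤ N)
    (huv : ∀ x z, u x ^ s ≤ v z * ENNReal.ofReal (Real.exp (s / (2 * (1 - s)) * (x - z) ^ 2))) :
    (∫⁻ x, u x ∂gaussianReal 0 1) ^ s ≤ ∫⁻ x, v x ∂gaussianReal 0 1 := by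
  have hs1' : 0 < 1 - s := by linarith
  set φ := gaussianPDF 0 1 with hφ
  have hφm : Measurable φ := measurable_gaussianPDF 0 1
  have hφpos : ∀ x, φ x ≠ 0 := fun x => (gaussianPDF_pos 0 one_ne_zero x).ne'
  have hφtop : ∀ x, φ x ≠ ⊤ := fun x => ENNReal.ofReal_ne_top
  have hφ0 : ∀ x, φ x ≤ φ 0 := by
    obtain ⟨A, hA⟩ := gaussianPDF_eq_exp
    intro x
    rw [hφ, hA, hA]
    refine ENNReal.ofReal_le_ofReal (Real.exp_le_exp.2 ?_)
    nlinarith [sq_nonneg x]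
  have hφint : ∫⁻ x, φ x = 1 := lintegral_gaussianPDF_eq_one 0 one_ne_zero
  have hγ : ∀ w : ℝ → ENNReal, Measurable w → ∫⁻ x, w x ∂gaussianReal 0 1 = ∫⁻ x, w x * φ x := by
    intro w hw
    rw [gaussianReal_of_var_ne_zero 0 one_ne_zero, lintegral_withDensity_eq_lintegral_mul _ hφm hw]
    simp only [Pi.mul_apply, mul_comm, hφ]
  rw [hγ u hu, hγ v hv]
  set f : ℝ → ENNReal := fun x => u x * φ x with hf
  have hfm : Measurable f := hu.mul hφm
  have hvm : Measurable fun x => v x * φ x := hv.mul hφm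
  set M := ⨆ x, f x with hM
  have hMtop : M ≠ ⊤ := by
    refine ne_top_of_le_ne_top (ENNReal.mul_ne_top hN (hφtop 0)) (iSup_le fun x => ?_)
    exact mul_le_mul' (huN x) (hφ0 x)
  rcases eq_or_ne M 0 with hM0 | hM0
  · have : ∀ x, f x = 0 := fun x => le_antisymm (hM0 ▸ le_iSup f x) zero_le
    rw [lintegral_congr this, lintegral_zero, ENNReal.zero_rpow_of_pos hs0]
    exact zero_le
  set k := φ 0 with hk
  have hk0 : k ≠ 0 := hφpos 0
  have hktop : k ≠ ⊤ := hφtop 0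
  set D := M ^ s * k ^ (1 - s) with hD
  have hD0 : D ≠ 0 := mul_ne_zero (ENNReal.rpow_pos (pos_iff_ne_zero.2 hM0) hMtop).ne'
    (ENNReal.rpow_pos (pos_iff_ne_zero.2 hk0) hktop).ne'
  have hDtop : D ≠ ⊤ := ENNReal.mul_ne_top (ENNReal.rpow_ne_top_of_nonneg hs0.le hMtop)
    (ENNReal.rpow_ne_top_of_nonneg hs1'.le hktop)
  have hscale : ∀ a b : ENNReal, (a / M) ^ s * (b / k) ^ (1 - s) = a ^ s * b ^ (1 - s) / D := by
    intro a b
    rw [ENNReal.div_rpow_of_nonneg _ _ hs0.le, ENNReal.div_rpow_of_nonneg _ _ hs1'.le, hD,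
      ENNReal.mul_div_mul_comm]
    · exact Or.inr (ENNReal.rpow_ne_top_of_nonneg hs1'.le hktop)
    · exact Or.inl (ENNReal.rpow_ne_top_of_nonneg hs0.le hMtop)
  have key := prekopa_leindler_sup_one hs0 hs1 (F := fun x => f x / M) (G := fun x => φ x / k)
    (H := fun x => v x * φ x / D) (hfm.div_const _) (hφm.div_const _) (hvm.div_const _) ?_ ?_ ?_
  · have h := (ennreal_weighted_am_gm hs0 hs1 _ _).trans key
    simp only [div_eq_mul_inv] at h
    rw [lintegral_mul_const _ hfm, lintegral_mul_const _ hφm, lintegral_mul_const _ hvm,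
      ← div_eq_mul_inv, ← div_eq_mul_inv, ← div_eq_mul_inv, hscale, hφint, ENNReal.one_rpow,
      mul_one] at h
    rwa [ENNReal.div_le_iff hD0 hDtop, ENNReal.div_mul_cancel hD0 hDtop] at h
  · simp only [div_eq_mul_inv]
    rw [← ENNReal.iSup_mul, ← hM, ENNReal.mul_inv_cancel hM0 hMtop]
  · simp only [div_eq_mul_inv]
    rw [← ENNReal.iSup_mul, le_antisymm (iSup_le hφ0) (le_iSup φ 0), ENNReal.mul_inv_cancel hk0 hktop]
  · intro c x y hcx hcy
    have h1 : c = c ^ s * c ^ (1 - s) := by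
      rw [← ENNReal.rpow_add_of_nonneg _ _ hs0.le hs1'.le]; simp
    rw [h1]
    refine (ENNReal.mul_lt_mul (ENNReal.rpow_lt_rpow hcx hs0)
      (ENNReal.rpow_lt_rpow hcy hs1')).trans_le ?_
    rw [hscale]
    gcongr ?_ / D
    calc f x ^ s * φ y ^ (1 - s) = u x ^ s * (φ x ^ s * φ y ^ (1 - s)) := by
          rw [hf, ENNReal.mul_rpow_of_nonneg _ _ hs0.le, mul_assoc]
      _ ≤ _ := mul_le_mul_left (huv x (s * x + (1 - s) * y)) _
      _ = _ := by rw [mul_assoc, gaussianPDF_geodesic hs1]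

/-- Removal of the boundedness assumption by truncating `u` and monotone convergence. -/
theorem gaussian_prekopa_one_dim {s : ℝ} (hs0 : 0 < s) (hs1 : s < 1) {u v : ℝ → ENNReal}
    (hu : Measurable u) (hv : Measurable v)
    (huv : ∀ x z, u x ^ s ≤ v z * ENNReal.ofReal (Real.exp (s / (2 * (1 - s)) * (x - z) ^ 2))) :
    (∫⁻ x, u x ∂gaussianReal 0 1) ^ s ≤ ∫⁻ x, v x ∂gaussianReal 0 1 := by
  have h : ∫⁻ x, u x ∂gaussianReal 0 1 = ⨆ N : ℕ, ∫⁻ x, min (u x) N ∂gaussianReal 0 1 := by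
    rw [← lintegral_iSup]
    · congr with x
      rw [← inf_iSup_eq, ENNReal.iSup_natCast, inf_top_eq]
    · exact fun N => hu.min measurable_const
    · exact fun N N' h x => min_le_min_left _ (by exact_mod_cast h)
  rw [← ENNReal.le_rpow_inv_iff hs0, h]
  refine iSup_le fun N => ?_
  rw [ENNReal.le_rpow_inv_iff hs0]
  refine gaussian_prekopa_one_dim_bounded hs0 hs1 (hu.min measurable_const) hv N
    (ENNReal.natCast_ne_top N) (fun x => min_le_right _ _) fun x z => le_trans ?_ (huv x z)
  gcongr
  exact min_le_left _ _

/-- The Gaussian inequality in dimension `n`. The hypothesis says that `v` dominates the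
sup-convolution of `u ^ s` with a Gaussian cost; it passes to the marginals in the first coordinate
by the inductive hypothesis applied to sections, so the inequality tensorises. -/
theorem gaussian_prekopa {s : ℝ} (hs0 : 0 < s) (hs1 : s < 1) (n : ℕ) :
    ∀ {u v : (Fin n → ℝ) → ENNReal}, Measurable u → Measurable v →
    (∀ x z, u x ^ s ≤
      v z * ENNReal.ofReal (Real.exp (s / (2 * (1 - s)) * ∑ i, (x i - z i) ^ 2))) →
    (∫⁻ x, u x ∂(Measure.pi fun _ : Fin n => gaussianReal 0 1)) ^ s ≤
      ∫⁻ x, v x ∂(Measure.pi fun _ : Fin n => gaussianReal 0 1) := by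
  induction n with
  | zero =>
    intro u v hu hv huv
    rw [Measure.pi_of_empty, lintegral_dirac, lintegral_dirac]
    simpa using huv (fun a => isEmptyElim a) (fun a => isEmptyElim a)
  | succ n ih =>
    intro u v hu hv huv
    have hsymm : ∀ q : ℝ × (Fin n → ℝ),
        (MeasurableEquiv.piFinSuccAbove (fun _ : Fin (n + 1) => ℝ) 0).symm q =
          (Fin.cons q.1 q.2 : Fin (n + 1) → ℝ) :=
      fun q => Fin.insertNth_zero' q.1 q.2
    have hcons : Measurable fun q : ℝ × (Fin n → ℝ) => (Fin.cons q.1 q.2 : Fin (n + 1) → ℝ) := by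
      rw [← funext hsymm]
      exact (MeasurableEquiv.piFinSuccAbove (fun _ : Fin (n + 1) => ℝ) 0).symm.measurable
    have hfub : ∀ w : (Fin (n + 1) → ℝ) → ENNReal, Measurable w →
        ∫⁻ x, w x ∂(Measure.pi fun _ : Fin (n + 1) => gaussianReal 0 1) =
        ∫⁻ t, ∫⁻ y, w (Fin.cons t y) ∂(Measure.pi fun _ : Fin n => gaussianReal 0 1)
          ∂gaussianReal 0 1 := by
      intro w hw
      have hmp := (measurePreserving_piFinSuccAbove
        (fun _ : Fin (n + 1) => gaussianReal 0 1) 0).symm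
      rw [← hmp.lintegral_comp hw]
      simp only [hsymm]
      exact lintegral_prod (fun q : ℝ × (Fin n → ℝ) => w (Fin.cons q.1 q.2))
        (hw.comp hcons).aemeasurable
    rw [hfub u hu, hfub v hv]
    refine gaussian_prekopa_one_dim hs0 hs1 (hu.comp hcons).lintegral_prod_right'
      (hv.comp hcons).lintegral_prod_right' fun t r => ?_
    have hsec : ∀ t : ℝ, Measurable fun y : Fin n → ℝ => (Fin.cons t y : Fin (n + 1) → ℝ) :=
      fun t => hcons.comp measurable_prodMk_left
    have hvr : Measurable fun y : Fin n → ℝ => v (Fin.cons r y) := hv.comp (hsec r)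
    have hut : Measurable fun y : Fin n → ℝ => u (Fin.cons t y) := hu.comp (hsec t)
    rw [← lintegral_mul_const _ hvr]
    refine ih hut (hvr.mul_const _) fun x z => ?_
    refine (huv (Fin.cons t x) (Fin.cons r z)).trans_eq ?_
    rw [Fin.sum_univ_succ, mul_add, Real.exp_add, ENNReal.ofReal_mul (by positivity), mul_assoc]
    simp

/-! ### Euclidean Lipschitz functions of a Gaussian vector -/

/-- A function with Euclidean gradient at most `1` is `1`-Lipschitz for the Euclidean distance: mean
value theorem on the segment and Cauchy–Schwarz. The distance is written out because `Fin n → ℝ`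
carries the sup norm. -/
theorem sub_le_sqrt_of_grad_le_one {n : ℕ} {g : (Fin n → ℝ) → ℝ} (hg : ContDiff ℝ 1 g)
    (hgrad : ∀ x : Fin n → ℝ,
      Real.sqrt (∑ i, (fderiv ℝ g x (Pi.single i 1)) ^ 2) ≤ 1) (x z : Fin n → ℝ) :
    g x - g z ≤ √(∑ i, (x i - z i) ^ 2) := by
  have hline : ∀ t : ℝ, HasDerivAt (fun t : ℝ => g (z + t • (x - z)))
      (fderiv ℝ g (z + t • (x - z)) (x - z)) t := by
    intro t
    have h1 : HasDerivAt (fun t : ℝ => z + t • (x - z)) (x - z) t := by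
      simpa using ((hasDerivAt_id t).smul_const (x - z)).const_add z
    exact ((hg.differentiable one_ne_zero _).hasFDerivAt).comp_hasDerivAt t h1
  obtain ⟨t, -, ht⟩ := exists_hasDerivAt_eq_slope _ _ one_pos
    (fun t _ => (hline t).continuousAt.continuousWithinAt) (fun t _ => hline t)
  simp only [one_smul, zero_smul, add_zero, sub_zero, div_one, add_sub_cancel] at ht
  rw [← ht]
  set w := z + t • (x - z)
  have hsum : fderiv ℝ g w (x - z) = ∑ i, fderiv ℝ g w (Pi.single i 1) * (x i - z i) := by
    conv_lhs => rw [← Finset.univ_sum_single (x - z), map_sum]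
    refine Finset.sum_congr rfl fun i _ => ?_
    have : (Pi.single i ((x - z) i) : Fin n → ℝ) = (x i - z i) • Pi.single i 1 := by
      rw [← Pi.single_smul]; simp
    rw [this, map_smul, smul_eq_mul, mul_comm]
  rw [hsum]
  refine (Real.sum_mul_le_sqrt_mul_sqrt _ _ _).trans ?_
  exact mul_le_of_le_one_left (Real.sqrt_nonneg _) (hgrad w)

theorem integrable_exp_mul_of_lipschitz {n : ℕ} {g : (Fin n → ℝ) → ℝ} (hg : Continuous g)
    (hlip : ∀ x z, g x - g z ≤ √(∑ i, (x i - z i) ^ 2)) (t : ℝ) :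
    Integrable (fun x => Real.exp (t * g x)) (Measure.pi fun _ : Fin n => gaussianReal 0 1) := by
  have hb : Integrable (fun x : Fin n → ℝ => Real.exp (|t| * |g 0|) * ∏ i, Real.exp (|t| * |x i|))
      (Measure.pi fun _ : Fin n => gaussianReal 0 1) := by
    refine Integrable.const_mul ?_ _
    refine Integrable.fintype_prod (f := fun _ y => Real.exp (|t| * |y|)) fun _ => ?_
    exact integrable_exp_mul_abs (integrable_exp_mul_gaussianReal |t|)
      (integrable_exp_mul_gaussianReal (-|t|))
  refine hb.mono' (by fun_prop) (Filter.Eventually.of_forall fun x => ?_)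
  rw [Real.norm_of_nonneg (Real.exp_pos _).le, ← Real.exp_sum, ← Real.exp_add, ← Finset.mul_sum,
    ← mul_add]
  have hnorm : √(∑ i, x i ^ 2) ≤ ∑ i, |x i| := by
    refine Real.sqrt_le_iff.2 ⟨by positivity, ?_⟩
    simpa [sq_abs] using
      Finset.sum_sq_le_sq_sum_of_nonneg (s := Finset.univ) (f := fun i => |x i|) (by simp)
  have h1 : |g x - g 0| ≤ ∑ i, |x i| := by
    refine abs_le'.2 ⟨?_, ?_⟩
    · simpa using (hlip x 0).trans (by simpa using hnorm)
    · simpa using (hlip 0 x).trans (by simpa using hnorm)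
  have h2 : |g x| ≤ |g 0| + ∑ i, |x i| := by
    have := abs_sub_abs_le_abs_sub (g x) (g 0)
    linarith
  refine Real.exp_le_exp.2 ((le_abs_self _).trans ?_)
  rw [abs_mul]
  gcongr

/-- Since `cgf g γ t / t = log ‖exp g‖_t`, this says that `log ‖exp g‖_t` grows at rate at most `1/2`
in `t`. It is `gaussian_prekopa` with `s = p / q`, for which the constant `s / (2 * (1 - s))` equals
`p / (2 * (q - p))`. -/
theorem cgf_div_le {n : ℕ} {g : (Fin n → ℝ) → ℝ} (hg : Continuous g)
    (hlip : ∀ x z, g x - g z ≤ √(∑ i, (x i - z i) ^ 2)) {p q : ℝ} (hp : 0 < p) (hpq : p < q) :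
    cgf g (Measure.pi fun _ : Fin n => gaussianReal 0 1) q / q ≤
      cgf g (Measure.pi fun _ : Fin n => gaussianReal 0 1) p / p + (q - p) / 2 := by
  set γ := Measure.pi fun _ : Fin n => gaussianReal 0 1
  have hq : 0 < q := hp.trans hpq
  have hqp : 0 < q - p := by linarith
  have hint := integrable_exp_mul_of_lipschitz hg hlip
  have hs1 : p / q < 1 := (div_lt_one hq).2 hpq
  have hc : p / q / (2 * (1 - p / q)) = p / (2 * (q - p)) := by
    field_simp
  have hmgf : ∀ t, ∫⁻ x, ENNReal.ofReal (Real.exp (t * g x)) ∂γ = ENNReal.ofReal (mgf g γ t) := by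
    intro t
    rw [mgf, ofReal_integral_eq_lintegral_ofReal (hint t)
      (Filter.Eventually.of_forall fun x => (Real.exp_pos _).le)]
  have hpos : ∀ t, 0 < mgf g γ t := fun t => mgf_pos (hint t)
  have key := gaussian_prekopa (div_pos hp hq) hs1 n
    (u := fun x => ENNReal.ofReal (Real.exp (q * g x)))
    (v := fun x => ENNReal.ofReal (Real.exp (p * (q - p) / 2)) * ENNReal.ofReal (Real.exp (p * g x)))
    (by fun_prop) (by fun_prop) ?_
  · rw [lintegral_const_mul _ (by fun_prop), hmgf, hmgf, ENNReal.ofReal_rpow_of_pos (hpos q),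
      ← ENNReal.ofReal_mul (by positivity), ENNReal.ofReal_le_ofReal_iff
      (mul_nonneg (by positivity) (hpos p).le)] at key
    have h := Real.log_le_log (Real.rpow_pos_of_pos (hpos q) _) key
    rw [Real.log_rpow (hpos q), Real.log_mul (Real.exp_pos _).ne' (hpos p).ne', Real.log_exp] at h
    change p / q * cgf g γ q ≤ p * (q - p) / 2 + cgf g γ p at h
    calc cgf g γ q / q = (p / q * cgf g γ q) / p := by field_simp
      _ ≤ (p * (q - p) / 2 + cgf g γ p) / p := by gcongr
      _ = _ := by field_simp; ring
  · intro x z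
    rw [ENNReal.ofReal_rpow_of_pos (Real.exp_pos _), ← ENNReal.ofReal_mul (by positivity),
      ← ENNReal.ofReal_mul (by positivity), ← Real.exp_mul, ← Real.exp_add, ← Real.exp_add, hc]
    refine ENNReal.ofReal_le_ofReal (Real.exp_le_exp.2 ?_)
    have hl := hlip x z
    set S := ∑ i, (x i - z i) ^ 2
    have hS : 0 ≤ S := Finset.sum_nonneg fun i _ => sq_nonneg _
    -- `d ≤ t / 2 + d ^ 2 / (2 * t)` with `d` the distance and `t = q - p`
    have hd : √S ≤ (q - p) / 2 + S / (2 * (q - p)) := by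
      have : (q - p) / 2 + S / (2 * (q - p)) - √S = (√S - (q - p)) ^ 2 / (2 * (q - p)) := by
        rw [sub_sq, Real.sq_sqrt hS]
        field_simp
        ring
      have : 0 ≤ (√S - (q - p)) ^ 2 / (2 * (q - p)) := by positivity
      linarith
    calc q * g x * (p / q) = p * g x := by field_simp
      _ ≤ p * (g z + ((q - p) / 2 + S / (2 * (q - p)))) := by gcongr; linarith
      _ = _ := by field_simp; ring

/-- The limiting case `p → 0` of `cgf_div_le`: the quotient `cgf g γ p / p` tends to the derivative
of the cumulant generating function at `0`, which is the mean of `g`. -/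
theorem cgf_div_le_integral {n : ℕ} {g : (Fin n → ℝ) → ℝ} (hg : Continuous g)
    (hlip : ∀ x z, g x - g z ≤ √(∑ i, (x i - z i) ^ 2)) {q : ℝ} (hq : 0 < q) :
    cgf g (Measure.pi fun _ : Fin n => gaussianReal 0 1) q / q ≤
      (∫ x, g x ∂(Measure.pi fun _ : Fin n => gaussianReal 0 1)) + q / 2 := by
  set γ := Measure.pi fun _ : Fin n => gaussianReal 0 1
  have huniv : integrableExpSet g γ = Set.univ :=
    Set.eq_univ_of_forall (integrable_exp_mul_of_lipschitz hg hlip)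
  have h0 : (0 : ℝ) ∈ interior (integrableExpSet g γ) := by simp [huniv]
  have hd : HasDerivAt (cgf g γ) (∫ x, g x ∂γ) 0 := by
    have := (analyticAt_cgf h0).differentiableAt.hasDerivAt
    rw [deriv_cgf_zero h0] at this
    simpa using this
  have hlim := hd.tendsto_slope_zero_right
  have hlim2 : Filter.Tendsto (fun p : ℝ => (q - p) / 2) (nhdsWithin 0 (Set.Ioi 0))
      (nhds (q / 2)) := by
    have : Continuous fun p : ℝ => (q - p) / 2 := by fun_prop
    simpa using (this.tendsto 0).mono_left nhdsWithin_le_nhds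
  refine ge_of_tendsto (hlim.add hlim2) ?_
  filter_upwards [Ioo_mem_nhdsGT hq] with p hp
  have := cgf_div_le hg hlip hp.1 hp.2
  simpa [div_eq_inv_mul] using this

/-! ### The concentration inequality -/

theorem gaussian_concentration_pnorm
    (n : ℕ) (g : (Fin n → ℝ) → ℝ) (hg : ContDiff ℝ 1 g)
    (hgrad : ∀ x : Fin n → ℝ,
      Real.sqrt (∑ i, (fderiv ℝ g x (Pi.single i 1)) ^ 2) ≤ 1)
    (p r : ℝ) (hp : 0 ≤ p) (hr : p / 2 ≤ r) :
    (Measure.pi fun _ : Fin n => gaussianReal 0 1)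
        {x | g x - (if p = 0 then ∫ y, g y ∂(Measure.pi fun _ : Fin n => gaussianReal 0 1)
            else (1/p) * Real.log
              (∫ y, Real.exp (p * g y) ∂(Measure.pi fun _ : Fin n => gaussianReal 0 1))) ≥ r}
      ≤ ENNReal.ofReal (Real.exp (-(r + p/2) ^ 2 / 2)) := by
  set γ := Measure.pi fun _ : Fin n => gaussianReal 0 1
  have hlip := sub_le_sqrt_of_grad_le_one hg hgrad
  have hint := integrable_exp_mul_of_lipschitz hg.continuous hlip
  set m : ℝ := if p = 0 then ∫ y, g y ∂γ else (1/p) * Real.log (∫ y, Real.exp (p * g y) ∂γ) with hm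
  -- the exponent minimising the Chernoff bound
  set q := r + p / 2 with hqdef
  have hpq : p ≤ q := by linarith
  rcases (hp.trans hpq).eq_or_lt with hq0 | hq
  · rw [← hq0]
    simpa using prob_le_one
  have hcgf : cgf g γ q / q ≤ m + (q - p) / 2 := by
    rw [hm]
    split_ifs with h0
    · simpa [h0] using cgf_div_le_integral hg.continuous hlip hq
    · have hp' : 0 < p := lt_of_le_of_ne hp (Ne.symm h0)
      have hmc : (1 / p) * Real.log (∫ y, Real.exp (p * g y) ∂γ) = cgf g γ p / p := by
        rw [one_div_mul_eq_div]; rfl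
      rw [hmc]
      rcases hpq.eq_or_lt with h | h
      · rw [← h]; simp
      · exact cgf_div_le hg.continuous hlip hp' h
  have hcgf' : cgf g γ q ≤ (m + (q - p) / 2) * q := (div_le_iff₀ hq).1 hcgf
  have hset : {x | g x - m ≥ r} = {x | m + r ≤ g x} := by
    ext x
    simp only [Set.mem_ofPred_eq, ge_iff_le, le_sub_iff_add_le, add_comm]
  rw [hset, ← ofReal_measureReal]
  refine ENNReal.ofReal_le_ofReal ((measure_ge_le_exp_cgf _ hq.le (hint q)).trans ?_)
  refine Real.exp_le_exp.2 ?_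
  have : r = q - p / 2 := by simp [hqdef]
  rw [this]
  linarith
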